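/- Let V be an n-dimensional vector space over ℝ, let T be an invertible linear endomorphism of V, and let 1 ≤ d ≤ n. Then: (i) for every d-dimensional T-invariant subspace W of V, the wedge product of any basis of W is a totally decomposable eigenvector of ⋀^d T; (ii) for every totally decomposable eigenvector Λ = v₁ ∧ … ∧ v_d of ⋀^d T, the span of v₁, …, v_d is a d-dimensional T-invariant subspace; and (iii) these assignments are mutually inverse bijections between the set of d-dimensional T-invariant subspaces of V and the set of projective equivalence classes (i.e., classes up to nonzero scalar multiple) of totally decomposable eigenvectors of ⋀^d T. -/

import Mathlib

/-- The exterior algebra functorial map preserves the `d`-th exterior power. -/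
theorem map_mem_exteriorPower {V : Type*} [AddCommGroup V] [Module ℝ V] (d : ℕ)
    (T : V →ₗ[ℝ] V) : ∀ x ∈ ⋀[ℝ]^d V, ExteriorAlgebra.map T x ∈ ⋀[ℝ]^d V := by
  intro x hx
  have h : Submodule.map (ExteriorAlgebra.map T).toLinearMap
      (LinearMap.range (ExteriorAlgebra.ι ℝ (M := V))) ≤
      LinearMap.range (ExteriorAlgebra.ι ℝ (M := V)) := by
    rintro y hy
    rw [Submodule.mem_map] at hy
    obtain ⟨z, hz, rfl⟩ := hy
    obtain ⟨m, rfl⟩ := hz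
    exact ⟨T m, (ExteriorAlgebra.map_apply_ι T m).symm⟩
  have h2 : Submodule.map (ExteriorAlgebra.map T).toLinearMap (⋀[ℝ]^d V) ≤ ⋀[ℝ]^d V := by
    rw [Submodule.map_pow]
    exact pow_le_pow_left' h d
  exact h2 ⟨x, hx, rfl⟩

/-- The `d`-th exterior power `⋀^d T` of an endomorphism `T` of `V`, as an endomorphism of
`⋀^d V`; it is determined by `⋀^d T (u₁ ∧ ⋯ ∧ u_d) = T u₁ ∧ ⋯ ∧ T u_d`. -/
noncomputable def exteriorPowerMap {V : Type*} [AddCommGroup V] [Module ℝ V] (d : ℕ)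
    (T : V →ₗ[ℝ] V) : ⋀[ℝ]^d V →ₗ[ℝ] ⋀[ℝ]^d V :=
  (ExteriorAlgebra.map T).toLinearMap.restrict (map_mem_exteriorPower d T)

/-- The wedge product `v₁ ∧ v₂ ∧ ⋯ ∧ v_d`, as an element of `⋀^d V`. -/
noncomputable def wedge {V : Type*} [AddCommGroup V] [Module ℝ V] (d : ℕ) (v : Fin d → V) :
    ⋀[ℝ]^d V :=
  ⟨ExteriorAlgebra.ιMulti ℝ d v, ExteriorAlgebra.ιMulti_range ℝ d (Set.mem_range_self v)⟩

/-- `Λ ∈ ⋀^d V` is a totally decomposable eigenvector of `⋀^d T`: it is the wedge product of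
`d` linearly independent vectors, and it is an eigenvector of `⋀^d T`. -/
def IsDecompEigen {V : Type*} [AddCommGroup V] [Module ℝ V] (d : ℕ) (T : Module.End ℝ V)
    (L : ⋀[ℝ]^d V) : Prop :=
  (∃ v : Fin d → V, LinearIndependent ℝ v ∧ L = wedge d v) ∧
    ∃ mu : ℝ, exteriorPowerMap d (T : V →ₗ[ℝ] V) L = mu • L

/-- Projective equivalence (equality up to a nonzero scalar multiple) on the set of totally
decomposable eigenvectors of `⋀^d T`. -/
def projSetoid {V : Type*} [AddCommGroup V] [Module ℝ V] (d : ℕ) (T : Module.End ℝ V) :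
    Setoid {L : ⋀[ℝ]^d V // IsDecompEigen d T L} where
  r L L' := ∃ c : ℝ, c ≠ 0 ∧ (L' : ⋀[ℝ]^d V) = c • (L : ⋀[ℝ]^d V)
  iseqv := by
    constructor
    · exact fun L => ⟨1, one_ne_zero, (one_smul _ _).symm⟩
    · rintro L L' ⟨c, hc, h⟩
      exact ⟨c⁻¹, inv_ne_zero hc, by rw [h, smul_smul, inv_mul_cancel₀ hc, one_smul]⟩
    · rintro L₁ L₂ L₃ ⟨c₁, hc₁, h₁⟩ ⟨c₂, hc₂, h₂⟩
      exact ⟨c₂ * c₁, mul_ne_zero hc₂ hc₁, by rw [h₂, h₁, smul_smul]⟩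

theorem wedge_eq_iMulti {V : Type*} [AddCommGroup V] [Module ℝ V] (d : ℕ) (v : Fin d → V) :
    wedge d v = exteriorPower.ιMulti ℝ d v := rfl

theorem wedge_ne_zero {V : Type*} [AddCommGroup V] [Module ℝ V] {d : ℕ} {v : Fin d → V}
    (hv : LinearIndependent ℝ v) : wedge d v ≠ 0 := by
  intro h0
  obtain ⟨f, hf⟩ := (Module.Basis.span hv).equivFun.toLinearMap.exists_extend
  have hfv : ∀ i, f (v i) = Pi.single i 1 := by
    intro i
    have h1 := LinearMap.congr_fun hf (Module.Basis.span hv i)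
    have h2 : ((Module.Basis.span hv i : Submodule.span ℝ (Set.range v)) : V) = v i :=
      congrArg Subtype.val (Module.Basis.span_apply hv i)
    simp only [LinearMap.comp_apply, Submodule.subtype_apply, h2] at h1
    rw [h1]
    ext j
    simp [Finsupp.single_apply, Pi.single_apply, eq_comm]
  have h3 := exteriorPower.alternatingMapLinearEquiv_apply_ιMulti
    ((Pi.basisFun ℝ (Fin d)).det.compLinearMap f) v
  rw [← wedge_eq_iMulti, h0, map_zero] at h3
  have h4 : (f ∘ v) = Pi.basisFun ℝ (Fin d) := by
    funext i
    simp [hfv]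
  have h5 : ((Pi.basisFun ℝ (Fin d)).det.compLinearMap f) v = 1 := by
    rw [AlternatingMap.compLinearMap_apply]
    change (Pi.basisFun ℝ (Fin d)).det (f ∘ v) = 1
    rw [h4, Module.Basis.det_self]
  rw [h5] at h3
  exact zero_ne_one h3

theorem wedge_mem_span {V : Type*} [AddCommGroup V] [Module ℝ V] {d : ℕ} {v w : Fin d → V}
    (hv : LinearIndependent ℝ v) (hw : ∀ i, w i ∈ Submodule.span ℝ (Set.range v)) :
    ∃ c : ℝ, wedge d w = c • wedge d v := by
  let b := Module.Basis.span hv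
  have hb : ∀ i, ((b i : Submodule.span ℝ (Set.range v)) : V) = v i :=
    fun i => congrArg Subtype.val (Module.Basis.span_apply hv i)
  have key : (exteriorPower.ιMulti ℝ d).compLinearMap (Submodule.span ℝ (Set.range v)).subtype =
      (LinearMap.toSpanSingleton ℝ _ (wedge d v)).compAlternatingMap b.det := by
    refine Module.Basis.ext_alternating b ?_
    intro s hs
    let σ : Equiv.Perm (Fin d) := Equiv.ofBijective s (Finite.injective_iff_bijective.mp hs)
    have e1 : (fun i => b (s i)) = b ∘ σ := rfl
    have e2 : ((exteriorPower.ιMulti ℝ d).compLinearMap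
        (Submodule.span ℝ (Set.range v)).subtype) b = wedge d v := by
      rw [AlternatingMap.compLinearMap_apply, wedge_eq_iMulti]
      congr 1
      funext i
      exact hb i
    rw [e1, AlternatingMap.map_perm, AlternatingMap.map_perm, e2]
    simp [b.det_self]
  refine ⟨b.det (fun i => ⟨w i, hw i⟩), ?_⟩
  have := DFunLike.congr_fun key (fun i => (⟨w i, hw i⟩ : Submodule.span ℝ (Set.range v)))
  exact this

theorem span_le_of_wedge {V : Type*} [AddCommGroup V] [Module ℝ V] {d : ℕ} {v w : Fin d → V}
    (hv : LinearIndependent ℝ v) {c : ℝ} (h : wedge d v = c • wedge d w) :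
    Submodule.span ℝ (Set.range w) ≤ Submodule.span ℝ (Set.range v) := by
  rw [Submodule.span_le]
  rintro _ ⟨j, rfl⟩
  by_contra hj
  have hli : LinearIndependent ℝ (Fin.cons (w j) v : Fin (d + 1) → V) :=
    linearIndependent_finCons.mpr ⟨hv, hj⟩
  apply wedge_ne_zero hli
  have h' : ExteriorAlgebra.ιMulti ℝ d v = c • ExteriorAlgebra.ιMulti ℝ d w :=
    congrArg Subtype.val h
  have hz : ExteriorAlgebra.ιMulti ℝ (d + 1) (Fin.cons (w j) w : Fin (d + 1) → V) = 0 := by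
    apply AlternatingMap.map_eq_zero_of_eq _ _ (i := 0) (j := j.succ)
    · simp
    · exact (Fin.succ_ne_zero j).symm
  rw [ExteriorAlgebra.ιMulti_succ_apply] at hz
  apply Subtype.ext
  change ExteriorAlgebra.ιMulti ℝ (d + 1) (Fin.cons (w j) v : Fin (d + 1) → V) = 0
  rw [ExteriorAlgebra.ιMulti_succ_apply]
  simp only [Matrix.vecTail, Function.comp_def, Fin.cons_zero, Fin.cons_succ] at hz ⊢
  rw [h', mul_smul_comm, hz, smul_zero]

theorem span_eq_of_wedge {V : Type*} [AddCommGroup V] [Module ℝ V] {d : ℕ} {v w : Fin d → V}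
    (hv : LinearIndependent ℝ v) (hw : LinearIndependent ℝ w) {c : ℝ}
    (h : wedge d v = c • wedge d w) :
    Submodule.span ℝ (Set.range v) = Submodule.span ℝ (Set.range w) := by
  have hc : c ≠ 0 := by
    rintro rfl
    exact wedge_ne_zero hv (by rw [h, zero_smul])
  refine le_antisymm (span_le_of_wedge (c := c⁻¹) hw ?_) (span_le_of_wedge hv h)
  rw [h, smul_smul, inv_mul_cancel₀ hc, one_smul]

theorem exteriorPowerMap_wedge {V : Type*} [AddCommGroup V] [Module ℝ V] {d : ℕ}
    (T : V →ₗ[ℝ] V) (v : Fin d → V) :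
    exteriorPowerMap d T (wedge d v) = wedge d (T ∘ v) := by
  apply Subtype.ext
  exact ExteriorAlgebra.map_apply_ιMulti T v

theorem decomp_of_invariant {V : Type*} [AddCommGroup V] [Module ℝ V] {d : ℕ}
    (T : Module.End ℝ V) (W : Submodule ℝ V) (hW : Submodule.map T W ≤ W) (v : Fin d → V)
    (hv : LinearIndependent ℝ v) (hs : Submodule.span ℝ (Set.range v) = W) :
    IsDecompEigen d T (wedge d v) := by
  refine ⟨⟨v, hv, rfl⟩, ?_⟩
  rw [exteriorPowerMap_wedge]
  apply wedge_mem_span hv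
  intro i
  rw [hs]
  apply hW
  refine ⟨v i, ?_, rfl⟩
  rw [← hs]
  exact Submodule.subset_span ⟨i, rfl⟩

theorem invariant_of_decomp {V : Type*} [AddCommGroup V] [Module ℝ V] {d : ℕ}
    (T : Module.End ℝ V) (hT : IsUnit T) (v : Fin d → V)
    (hL : IsDecompEigen d T (wedge d v)) (hv : LinearIndependent ℝ v) :
    Module.finrank ℝ (Submodule.span ℝ (Set.range v)) = d ∧
      Submodule.map T (Submodule.span ℝ (Set.range v)) ≤ Submodule.span ℝ (Set.range v) := by
  refine ⟨by simpa using finrank_span_eq_card hv, ?_⟩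
  obtain ⟨-, mu, hmu⟩ := hL
  rw [exteriorPowerMap_wedge] at hmu
  have hinj : Function.Injective T := ((Module.End.isUnit_iff T).mp hT).1
  have hTv : LinearIndependent ℝ (T ∘ v) := hv.map' T (LinearMap.ker_eq_bot.mpr hinj)
  rw [Submodule.map_span, ← Set.range_comp]
  exact (span_eq_of_wedge hTv hv hmu).le

/-- Let `V` be an `n`-dimensional real vector space, `T` an invertible endomorphism of `V`,
and `1 ≤ d ≤ n`.  Then:
(i) for every `d`-dimensional `T`-invariant subspace `W` of `V`, the wedge product of any basis
of `W` is a totally decomposable eigenvector of `⋀^d T`;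
(ii) for every totally decomposable eigenvector `Λ = v₁ ∧ ⋯ ∧ v_d` of `⋀^d T`, the span of
`v₁, …, v_d` is a `d`-dimensional `T`-invariant subspace;
(iii) these assignments are mutually inverse bijections between the set of `d`-dimensional
`T`-invariant subspaces of `V` and the set of projective equivalence classes of totally
decomposable eigenvectors of `⋀^d T`. -/
theorem invariant_subspace_correspondence {V : Type*} [AddCommGroup V] [Module ℝ V]
    [FiniteDimensional ℝ V] (n d : ℕ) (hn : Module.finrank ℝ V = n)
    (hd1 : 1 ≤ d) (hdn : d ≤ n) (T : Module.End ℝ V) (hT : IsUnit T) :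
    -- (i)
    (∀ W : Submodule ℝ V, Module.finrank ℝ W = d → Submodule.map T W ≤ W →
      ∀ v : Fin d → V, LinearIndependent ℝ v → Submodule.span ℝ (Set.range v) = W →
        IsDecompEigen d T (wedge d v)) ∧
    -- (ii)
    (∀ L : ⋀[ℝ]^d V, IsDecompEigen d T L → ∀ v : Fin d → V, LinearIndependent ℝ v →
      L = wedge d v →
        Module.finrank ℝ (Submodule.span ℝ (Set.range v)) = d ∧
          Submodule.map T (Submodule.span ℝ (Set.range v)) ≤ Submodule.span ℝ (Set.range v)) ∧
    -- (iii)
    (∃ e : {W : Submodule ℝ V // Module.finrank ℝ W = d ∧ Submodule.map T W ≤ W} ≃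
        Quotient (projSetoid d T),
      (∀ (W : {W : Submodule ℝ V // Module.finrank ℝ W = d ∧ Submodule.map T W ≤ W})
        (v : Fin d → V), LinearIndependent ℝ v → Submodule.span ℝ (Set.range v) = W.1 →
          ∀ h : IsDecompEigen d T (wedge d v),
            e W = Quotient.mk (projSetoid d T) ⟨wedge d v, h⟩) ∧
      (∀ (L : {L : ⋀[ℝ]^d V // IsDecompEigen d T L}) (v : Fin d → V),
        LinearIndependent ℝ v → L.1 = wedge d v →
          (e.symm (Quotient.mk (projSetoid d T) L)).1 =
            Submodule.span ℝ (Set.range v))) := by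
  refine ⟨fun W _ hW v hv hs => decomp_of_invariant T W hW v hv hs, ?_, ?_⟩
  · rintro L hL v hv rfl
    exact invariant_of_decomp T hT v hL hv
  · let g : {L : ⋀[ℝ]^d V // IsDecompEigen d T L} →
        {W : Submodule ℝ V // Module.finrank ℝ W = d ∧ Submodule.map T W ≤ W} := fun L =>
      ⟨Submodule.span ℝ (Set.range L.2.1.choose),
        invariant_of_decomp T hT _ (by rw [← L.2.1.choose_spec.2]; exact L.2)
          L.2.1.choose_spec.1⟩
    have hg : ∀ (L : {L : ⋀[ℝ]^d V // IsDecompEigen d T L}) (v : Fin d → V),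
        LinearIndependent ℝ v → L.1 = wedge d v → (g L).1 = Submodule.span ℝ (Set.range v) := by
      intro L v hv hLv
      refine span_eq_of_wedge (c := 1) L.2.1.choose_spec.1 hv ?_
      rw [one_smul, ← hLv]
      exact L.2.1.choose_spec.2.symm
    have hresp : ∀ L L' : {L : ⋀[ℝ]^d V // IsDecompEigen d T L},
        (projSetoid d T).r L L' → g L = g L' := by
      rintro L L' ⟨c, hc, h⟩
      obtain ⟨v, hv, hLv⟩ := L.2.1
      obtain ⟨w, hw, hLw⟩ := L'.2.1
      apply Subtype.ext
      rw [hg L v hv hLv, hg L' w hw hLw]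
      rw [hLv, hLw] at h
      exact (span_eq_of_wedge hw hv h).symm
    let G : Quotient (projSetoid d T) →
        {W : Submodule ℝ V // Module.finrank ℝ W = d ∧ Submodule.map T W ≤ W} :=
      Quotient.lift g hresp
    have hinj : Function.Injective G := by
      intro a b
      induction a using Quotient.inductionOn with | _ L =>
      induction b using Quotient.inductionOn with | _ L' =>
      intro h
      have h1 : (g L).1 = (g L').1 := congrArg Subtype.val h
      obtain ⟨v, hv, hLv⟩ := L.2.1
      obtain ⟨w, hw, hLw⟩ := L'.2.1
      rw [hg L v hv hLv, hg L' w hw hLw] at h1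
      obtain ⟨c, hc⟩ := wedge_mem_span (w := w) hv (by
        intro i
        rw [h1]
        exact Submodule.subset_span ⟨i, rfl⟩)
      apply Quotient.sound
      refine ⟨c, ?_, by rw [hLv, hLw, hc]⟩
      rintro rfl
      exact wedge_ne_zero hw (by rw [hc, zero_smul])
    have hsurj : Function.Surjective G := by
      rintro ⟨W, hWd, hW⟩
      let b := Module.finBasisOfFinrankEq ℝ W hWd
      have hv : LinearIndependent ℝ (fun i => (b i : V)) :=
        b.linearIndependent.map' W.subtype W.ker_subtype
      have hs : Submodule.span ℝ (Set.range (fun i => (b i : V))) = W := by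
        have : (fun i => (b i : V)) = W.subtype ∘ b := rfl
        rw [this, Set.range_comp, ← Submodule.map_span, b.span_eq, Submodule.map_top,
          Submodule.range_subtype]
      refine ⟨Quotient.mk _ ⟨wedge d _, decomp_of_invariant T W hW _ hv hs⟩, ?_⟩
      apply Subtype.ext
      exact (hg _ _ hv rfl).trans hs
    refine ⟨(Equiv.ofBijective G ⟨hinj, hsurj⟩).symm, ?_, ?_⟩
    · intro W v hv hs h
      rw [Equiv.symm_apply_eq]
      apply Subtype.ext
      exact hs.symm.trans (hg ⟨wedge d v, h⟩ v hv rfl).symm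
    · intro L v hv hLv
      exact hg L v hv hLv
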